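/- arXiv:2302.00596 — 3 statements merged into one kernel-verified Lean document; each statement's English description precedes it below -/
import Mathlib

section
/- For every integer n with 2 ≤ n ≤ N−1 and every sample point s = a + x, x ∈ {0, 1, …, N−1}, the weighted Racah polynomials satisfy the three-term recurrence in the degree: R̂_n(s) = Θ1·R̂_{n−1}(s) + Θ2·R̂_{n−2}(s), where Θ1 = (Θ11/Θ0)·√Θ12 and Θ2 = (Θ21/Θ0)·√(Θ12·Θ22), with Θ0 = n(α+β+n) / [(α+β+2n−1)(α+β+2n)], Θ11 = s(s+1) − (a² + b² + (a−β)² + (b+α)² − 2)/4 + (α+β+2n−2)(α+β+2n)/8 − (1/2)·(β²−α²)·[(b+α/2)² − (a−β/2)²] / [(α+β+2n−2)(α+β+2n)], Θ21 = −[(α+n−1)(β+n−1) / ((α+β+2n−2)(α+β+2n−1))]·[(a+b+(α−β)/2)² − (n−1+(α+β)/2)²]·[(b−a+(α+β)/2)² − (n−1+(α+β)/2)²], Θ12 = n(α+β+n)(α+β+2n+1) / [(α+n)(β+n)(α+β+2n−1)(a−b−α−β−n)(a−b+n)(a+b+α+n)(a+b−β−n)], and Θ22 = (n−1)(α+β+n−1)(α+β+2n−1)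 / [(α+n−1)(β+n−1)(α+β+2n−3)(a−b−α−β−n+1)(a−b+n−1)(a+b+α+n−1)(a+b−β−n+1)]. -/
open Finset

/-- Rising Pochhammer symbol `(x)_k = x (x+1) ⋯ (x+k-1)` for a real `x`. -/
noncomputable def pochR (x : ℝ) (k : ℕ) : ℝ := ∏ i ∈ Finset.range k, (x + i)

/-- The `n`-th Racah polynomial in Zhu's normalization. -/
noncomputable def racahR (a b α β : ℝ) (n : ℕ) (s : ℝ) : ℝ :=
  (1 / (Nat.factorial n : ℝ)) * pochR (a + b + α + 1) n * pochR (β + 1) n *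
    pochR (a - b + 1) n *
    ∑ k ∈ Finset.range (n + 1),
      pochR (-(n : ℝ)) k * pochR (a - s) k * pochR (a + s + 1) k *
          pochR (α + β + (n : ℝ) + 1) k /
        (pochR (β + 1) k * pochR (a + b + α + 1) k * pochR (a - b + 1) k *
          (Nat.factorial k : ℝ))

/-- The Racah weight function `ρ(s)`. -/
noncomputable def racahW (a b α β : ℝ) (s : ℝ) : ℝ :=
  Real.Gamma (a + s + 1) * Real.Gamma (b + s + α + 1) * Real.Gamma (b + α - s) *
      Real.Gamma (s - a + β + 1) /
    (Real.Gamma (b + s + 1) * Real.Gamma (b - s) * Real.Gamma (s - a + 1) *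
      Real.Gamma (a - β + s + 1))

/-- The squared norm `d_n²`. -/
noncomputable def racahD2 (a b α β : ℝ) (n : ℕ) : ℝ :=
  Real.Gamma (α + n + 1) * Real.Gamma (β + n + 1) * Real.Gamma (a + b + α + n + 1) *
      Real.Gamma (b - a + α + β + n + 1) /
    ((α + β + 2 * n + 1) * Real.Gamma (n + 1) * Real.Gamma (b - a - n) *
      Real.Gamma (α + β + n + 1) * Real.Gamma (a + b - n - β))

/-- The weighted Racah polynomial `R̂_n(s) = R_n(s) √(ρ(s)(2s+1)/d_n²)`. -/
noncomputable def racahHat (a b α β : ℝ) (n : ℕ) (s : ℝ) : ℝ :=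
  racahR a b α β n s * Real.sqrt (racahW a b α β s * (2 * s + 1) / racahD2 a b α β n)

/-- `σ(s) = (s−a)(s+b)(s+a−β)(b+α−s)`. -/
noncomputable def racahSigma (a b α β : ℝ) (s : ℝ) : ℝ :=
  (s - a) * (s + b) * (s + a - β) * (b + α - s)

/-- `τ(s)`. -/
noncomputable def racahTau (a b α β : ℝ) (s : ℝ) : ℝ :=
  a * (α + 1) * (a - β) + b * (b + α) * (β + 1) - (α + 1) * (β + 1) -
    s * (s + 1) * (α + β + 2)

/-- `λ_n = n (n+α+β+1)`. -/
noncomputable def racahLam (α β : ℝ) (n : ℕ) : ℝ := (n : ℝ) * ((n : ℝ) + α + β + 1)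

/-- `Θ0` in the three-term recurrence over the degree. -/
noncomputable def theta0 (α β : ℝ) (n : ℕ) : ℝ :=
  (n : ℝ) * (α + β + n) / ((α + β + 2 * n - 1) * (α + β + 2 * n))

/-- `Θ11` in the three-term recurrence over the degree. -/
noncomputable def theta11 (a b α β : ℝ) (n : ℕ) (s : ℝ) : ℝ :=
  s * (s + 1) - (a ^ 2 + b ^ 2 + (a - β) ^ 2 + (b + α) ^ 2 - 2) / 4 +
    (α + β + 2 * n - 2) * (α + β + 2 * n) / 8 -
    (1 / 2) * ((β ^ 2 - α ^ 2) * ((b + α / 2) ^ 2 - (a - β / 2) ^ 2) /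
      ((α + β + 2 * n - 2) * (α + β + 2 * n)))

/-- `Θ21` in the three-term recurrence over the degree. -/
noncomputable def theta21 (a b α β : ℝ) (n : ℕ) : ℝ :=
  -((α + n - 1) * (β + n - 1) / ((α + β + 2 * n - 2) * (α + β + 2 * n - 1))) *
    ((a + b + (α - β) / 2) ^ 2 - ((n : ℝ) - 1 + (α + β) / 2) ^ 2) *
    ((b - a + (α + β) / 2) ^ 2 - ((n : ℝ) - 1 + (α + β) / 2) ^ 2)

/-- `Θ12` in the three-term recurrence over the degree. -/
noncomputable def theta12 (a b α β : ℝ) (n : ℕ) : ℝ :=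
  (n : ℝ) * (α + β + n) * (α + β + 2 * n + 1) /
    ((α + n) * (β + n) * (α + β + 2 * n - 1) * (a - b - α - β - n) * (a - b + n) *
      (a + b + α + n) * (a + b - β - n))

/-- `Θ22` in the three-term recurrence over the degree. -/
noncomputable def theta22 (a b α β : ℝ) (n : ℕ) : ℝ :=
  ((n : ℝ) - 1) * (α + β + n - 1) * (α + β + 2 * n - 1) /
    ((α + n - 1) * (β + n - 1) * (α + β + 2 * n - 3) * (a - b - α - β - n + 1) *
      (a - b + n - 1) * (a + b + α + n - 1) * (a + b - β - n + 1))


lemma pochR_succ (x : ℝ) (k : ℕ) : pochR x (k + 1) = pochR x k * (x + k) := by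
  unfold pochR; rw [Finset.prod_range_succ]

lemma pochR_shift (x : ℝ) (k : ℕ) : pochR (x + 1) k * x = pochR x k * (x + k) := by
  induction k with
  | zero => simp [pochR]
  | succ k ih =>
    rw [pochR_succ, pochR_succ]
    push_cast
    linear_combination (x + 1 + k) * ih

lemma pochR_pos (x : ℝ) (hx : 0 < x) (k : ℕ) : 0 < pochR x k := by
  unfold pochR; apply Finset.prod_pos; intro i _; positivity

/-- Coefficient of the Racah polynomial in the basis `(a-s)_k (a+s+1)_k`. -/
noncomputable def rcoef (a b α β : ℝ) (n k : ℕ) : ℝ :=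
  (1 / (Nat.factorial n : ℝ)) * pochR (a + b + α + 1) n * pochR (β + 1) n *
    pochR (a - b + 1) n * (pochR (-(n : ℝ)) k * pochR (α + β + (n : ℝ) + 1) k /
        (pochR (β + 1) k * pochR (a + b + α + 1) k * pochR (a - b + 1) k *
          (Nat.factorial k : ℝ)))

/-- The basis `(a-s)_k (a+s+1)_k`. -/
noncomputable def rphi (a s : ℝ) (k : ℕ) : ℝ := pochR (a - s) k * pochR (a + s + 1) k

lemma racahR_eq (a b α β : ℝ) (n : ℕ) (s : ℝ) :
    racahR a b α β n s = ∑ k ∈ Finset.range (n + 1), rcoef a b α β n k * rphi a s k := by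
  unfold racahR rcoef rphi
  rw [Finset.mul_sum]
  apply Finset.sum_congr rfl
  intro k _
  ring

lemma rphi_succ (a s : ℝ) (k : ℕ) :
    rphi a s (k + 1) = rphi a s k * ((a + k) * (a + k + 1) - s * (s + 1)) := by
  unfold rphi; rw [pochR_succ, pochR_succ]; ring

lemma rcoef_n (a b α β : ℝ) (n k : ℕ) :
    rcoef a b α β (n + 1) k * (((n : ℝ) + 1 - k) * (n + (α + β) + 1)) =
      (a + b + α + 1 + n) * (β + 1 + n) * (a - b + 1 + n) * (n + (α + β) + 1 + k) *
        rcoef a b α β n k := by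
  unfold rcoef
  have h1 := pochR_shift (-((n : ℝ) + 1)) k
  have h2 := pochR_shift (α + β + n + 1) k
  rw [show -((n : ℝ) + 1) + 1 = -(n : ℝ) by ring] at h1
  rw [Nat.factorial_succ, pochR_succ, pochR_succ, pochR_succ]
  push_cast
  rw [show α + β + ((n : ℝ) + 1) + 1 = α + β + n + 1 + 1 by ring]
  have hn : (n : ℝ) + 1 ≠ 0 := by positivity
  have hf : (Nat.factorial n : ℝ) ≠ 0 := by positivity
  generalize pochR (β + 1) k * pochR (a + b + α + 1) k * pochR (a - b + 1) k *
          (Nat.factorial k : ℝ) = D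
  generalize pochR (a + b + α + 1) n = A1
  generalize pochR (β + 1) n = A2
  generalize pochR (a - b + 1) n = A3
  generalize pochR (-(n : ℝ)) k = P at *
  generalize pochR (-((n : ℝ) + 1)) k = P' at *
  generalize pochR (α + β + n + 1) k = Q at *
  generalize pochR (α + β + n + 1 + 1) k = Q' at *
  have e : P' * Q' * (((n : ℝ) + 1 - k) * (n + (α + β) + 1)) =
      P * Q * (n + 1) * (n + (α + β) + 1 + k) := by
    linear_combination Q' * (n + (α + β) + 1) * h1 + P * (n + 1) * h2
  calc _ = 1 / (((n : ℝ) + 1) * (Nat.factorial n : ℝ)) * (A1 * (a + b + α + 1 + n)) *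
        (A2 * (β + 1 + n)) * (A3 * (a - b + 1 + n)) *
        ((P' * Q' * (((n : ℝ) + 1 - k) * (n + (α + β) + 1))) / D) := by ring
    _ = _ := by
      rw [e]
      have h0 : ((n : ℝ) + 1) * ((n : ℝ) + 1)⁻¹ = 1 := mul_inv_cancel₀ hn
      simp only [div_eq_mul_inv, mul_inv, one_mul]
      generalize ((n : ℝ) + 1)⁻¹ = I at *
      generalize ((Nat.factorial n : ℝ))⁻¹ = F at *
      generalize D⁻¹ = E at *
      linear_combination (F * A1 * (a + b + α + 1 + n) * A2 * (β + 1 + n) * A3 *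
        (a - b + 1 + n) * P * Q * (n + (α + β) + 1 + k) * E) * h0

lemma rcoef_k (a b α β : ℝ) (n k : ℕ) (h1 : β + 1 + k ≠ 0) (h2 : a + b + α + 1 + k ≠ 0)
    (h3 : a - b + 1 + k ≠ 0) :
    rcoef a b α β n (k + 1) * (((k : ℝ) + 1) * (β + 1 + k) * (a + b + α + 1 + k) *
      (a - b + 1 + k)) = (k - n) * (n + (α + β) + 1 + k) * rcoef a b α β n k := by
  unfold rcoef
  rw [Nat.factorial_succ]
  simp only [pochR_succ _ k]
  push_cast
  have hk : (k : ℝ) + 1 ≠ 0 := by positivity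
  rw [show ∀ A P x Q y B1 z1 B2 z2 B3 z3 w F : ℝ,
    A * (P * x * (Q * y) / (B1 * z1 * (B2 * z2) * (B3 * z3) * (w * F))) * (w * z1 * z2 * z3) =
    x * y * (A * (P * Q / (B1 * B2 * B3 * F))) * ((w * z1 * z2 * z3) / (w * z1 * z2 * z3)) from by
      intros; simp only [div_eq_mul_inv, mul_inv]; ring]
  rw [div_self (by positivity)]
  ring

set_option maxRecDepth 100000 in
set_option maxHeartbeats 4000000 in
lemma rkey (a b α β v k t : ℝ) (h1 : v - k ≠ 0) (h2 : v - 1 + (α + β) + k ≠ 0)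
    (h3 : α + β + 2 * v - 2 ≠ 0) (h4 : α + β + 2 * v - 1 ≠ 0) (h5 : α + β + 2 * v ≠ 0) :
    v * ((a + b + α + v) * (β + v) * (a - b + v) * (v + (α + β) + k)) /
        ((α + β + 2 * v - 1) * (α + β + 2 * v) * (v - k)) -
      (t - (a ^ 2 + b ^ 2 + (a - β) ^ 2 + (b + α) ^ 2 - 2) / 4 +
    (α + β + 2 * v - 2) * (α + β + 2 * v) / 8 -
    (1 / 2) * ((β ^ 2 - α ^ 2) * ((b + α / 2) ^ 2 - (a - β / 2) ^ 2) /
      ((α + β + 2 * v - 2) * (α + β + 2 * v)))) -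
     (α + v - 1) * (a + b - β - v + 1) * (b - a + (α + β) + v - 1) *
       ((v - 1 - k) * (v - 1 + (α + β))) /
      ((α + β + 2 * v - 2) * (α + β + 2 * v - 1) * (v - 1 + (α + β) + k)) =
    ((a + k) * (a + k + 1) - t) +
      k * (β + k) * (a + b + α + k) * (a - b + k) / ((v - k) * (v - 1 + (α + β) + k)) := by
  obtain ⟨d1, e1⟩ : ∃ d, d = v - k := ⟨_, rfl⟩
  obtain ⟨d2, e2⟩ : ∃ d, d = v - 1 + (α + β) + k := ⟨_, rfl⟩
  obtain ⟨d3, e3⟩ : ∃ d, d = α + β + 2 * v - 2 := ⟨_, rfl⟩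
  obtain ⟨d4, e4⟩ : ∃ d, d = α + β + 2 * v - 1 := ⟨_, rfl⟩
  obtain ⟨d5, e5⟩ : ∃ d, d = α + β + 2 * v := ⟨_, rfl⟩
  rw [← e1] at h1 ⊢
  rw [← e2] at h2 ⊢
  rw [← e3] at h3 ⊢
  rw [← e4] at h4 ⊢
  rw [← e5] at h5 ⊢
  field_simp
  subst e1 e2 e3 e4 e5
  ring

lemma rstep (a b α β s : ℝ) (m k : ℕ) (h1 : (m : ℝ) + 2 - k ≠ 0)
    (h2 : (m : ℝ) + 1 + (α + β) + k ≠ 0)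
    (h3 : α + β + 2 * m + 2 ≠ 0) (h4 : α + β + 2 * m + 3 ≠ 0) (h5 : α + β + 2 * m + 4 ≠ 0)
    (h6 : (m : ℝ) + 2 + (α + β) ≠ 0)
    (hY1 : a + b + α + 1 + m ≠ 0) (hY2 : β + 1 + m ≠ 0) (hY3 : a - b + 1 + m ≠ 0) :
    theta0 α β (m + 2) * rcoef a b α β (m + 2) k -
      theta11 a b α β (m + 2) s * rcoef a b α β (m + 1) k -
      theta21 a b α β (m + 2) * rcoef a b α β m k =
    rcoef a b α β (m + 1) k * (((a + k) * (a + k + 1) - s * (s + 1)) +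
      k * (β + k) * (a + b + α + k) * (a - b + k) /
        (((m : ℝ) + 2 - k) * (m + 1 + (α + β) + k))) := by
  have c1 := rcoef_n a b α β (m + 1) k
  have c2 := rcoef_n a b α β m k
  have key := rkey a b α β (m + 2) k (s * (s + 1)) h1
    (by convert h2 using 1; ring) (by convert h3 using 1; ring)
    (by convert h4 using 1; ring) (by convert h5 using 1; ring)
  push_cast at c1
  have d1 : rcoef a b α β (m + 2) k = rcoef a b α β (m + 1) k *
      (((a + b + α + (m + 2)) * (β + (m + 2)) * (a - b + (m + 2)) * ((m + 2) + (α + β) + k)) /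
        (((m : ℝ) + 2 - k) * (m + 2 + (α + β)))) := by
    rw [← mul_div_assoc, eq_div_iff (mul_ne_zero h1 h6)]
    linear_combination c1
  have d2 : rcoef a b α β m k = rcoef a b α β (m + 1) k *
      (((m : ℝ) + 1 - k) * (m + 1 + (α + β)) /
        ((a + b + α + 1 + m) * (β + 1 + m) * (a - b + 1 + m) * (m + 1 + (α + β) + k))) := by
    rw [← mul_div_assoc, eq_div_iff (by positivity)]
    linear_combination -c2
  have t0 : theta0 α β (m + 2) *
      (((a + b + α + (m + 2)) * (β + (m + 2)) * (a - b + (m + 2)) * ((m + 2) + (α + β) + k)) /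
        (((m : ℝ) + 2 - k) * (m + 2 + (α + β)))) =
      ((m : ℝ) + 2) * ((a + b + α + ((m : ℝ) + 2)) * (β + ((m : ℝ) + 2)) * (a - b + ((m : ℝ) + 2)) * (((m : ℝ) + 2) + (α + β) + k)) /
        ((α + β + 2 * ((m : ℝ) + 2) - 1) * (α + β + 2 * ((m : ℝ) + 2)) * (((m : ℝ) + 2) - k)) := by
    unfold theta0
    push_cast
    have e : α + β + ((m : ℝ) + 2) = m + 2 + (α + β) := by ring
    rw [e]
    generalize (m : ℝ) + 2 + (α + β) = z at *
    rw [div_mul_div_comm]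
    rw [show ∀ A z B C D E F : ℝ, A * z * B / (C * D * (E * z)) = (A * B / (C * D * E)) * (z / z) from by
      intros; simp only [div_eq_mul_inv, mul_inv]; ring]
    · rw [div_self h6, mul_one]
    · exact 0
  have t2 : theta21 a b α β (m + 2) * (((m : ℝ) + 1 - k) * (m + 1 + (α + β)) /
        ((a + b + α + 1 + m) * (β + 1 + m) * (a - b + 1 + m) * (m + 1 + (α + β) + k))) =
      (α + ((m : ℝ) + 2) - 1) * (a + b - β - ((m : ℝ) + 2) + 1) * (b - a + (α + β) + ((m : ℝ) + 2) - 1) *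
       ((((m : ℝ) + 2) - 1 - k) * (((m : ℝ) + 2) - 1 + (α + β))) /
      ((α + β + 2 * ((m : ℝ) + 2) - 2) * (α + β + 2 * ((m : ℝ) + 2) - 1) * (((m : ℝ) + 2) - 1 + (α + β) + k)) := by
    have e : theta21 a b α β (m + 2) = ((a + b + α + 1 + m) * (β + 1 + m) * (a - b + 1 + m)) *
       ((α + ((m : ℝ) + 2) - 1) * (a + b - β - ((m : ℝ) + 2) + 1) * (b - a + (α + β) + ((m : ℝ) + 2) - 1) / ((α + β + 2 * ((m : ℝ) + 2) - 2) * (α + β + 2 * ((m : ℝ) + 2) - 1))) := by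
      unfold theta21; push_cast; ring
    rw [e]
    have hY : (a + b + α + 1 + m) * (β + 1 + m) * (a - b + 1 + m) ≠ 0 := by positivity
    generalize (a + b + α + 1 + m) * (β + 1 + m) * (a - b + 1 + m) = Y at *
    rw [show ((m : ℝ) + 2) - 1 + (α + β) + k = (m : ℝ) + 1 + (α + β) + k by ring,
      show ((m : ℝ) + 2) - 1 - k = (m : ℝ) + 1 - k by ring,
      show ((m : ℝ) + 2) - 1 + (α + β) = (m : ℝ) + 1 + (α + β) by ring]
    rw [show ∀ A B C Z : ℝ, Y * (A / B) * (C / (Y * Z)) = (A * C / (B * Z)) * (Y / Y) from by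
      intros; simp only [div_eq_mul_inv, mul_inv]; ring]
    rw [div_self hY, mul_one]
  have t1 : theta11 a b α β (m + 2) s = (s * (s + 1) - (a ^ 2 + b ^ 2 + (a - β) ^ 2 + (b + α) ^ 2 - 2) / 4 +
    (α + β + 2 * ((m : ℝ) + 2) - 2) * (α + β + 2 * ((m : ℝ) + 2)) / 8 -
    (1 / 2) * ((β ^ 2 - α ^ 2) * ((b + α / 2) ^ 2 - (a - β / 2) ^ 2) /
      ((α + β + 2 * ((m : ℝ) + 2) - 2) * (α + β + 2 * ((m : ℝ) + 2))))) := by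
    unfold theta11; push_cast; rfl
  rw [← t0, ← t1, ← t2] at key
  rw [show ((m : ℝ) + 2) - 1 + (α + β) + k = (m : ℝ) + 1 + (α + β) + k by ring] at key
  rw [d1, d2, ← key]
  ring

lemma rrec (N : ℕ) (a α β b s : ℝ) (ha : -(1/2) < a) (hα : -1 < α)
    (hβ1 : -1 < β) (hb : b = a + N) (m : ℕ) (hm : m + 3 ≤ N) (hq : α + β + 1 + m ≠ 0) :
    theta0 α β (m + 2) * racahR a b α β (m + 2) s =
      theta11 a b α β (m + 2) s * racahR a b α β (m + 1) s +
      theta21 a b α β (m + 2) * racahR a b α β m s := by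
  have hN : (m : ℝ) + 3 ≤ N := by exact_mod_cast hm
  have hm0 : (0 : ℝ) ≤ m := Nat.cast_nonneg m
  have step : ∀ k : ℕ, k ≤ m + 1 → _ := fun k hk => by
    have hk' : (k : ℝ) ≤ m + 1 := by exact_mod_cast hk
    have hk0 : (0 : ℝ) ≤ k := Nat.cast_nonneg k
    have h2 : (m : ℝ) + 1 + (α + β) + k ≠ 0 := by
      rcases Nat.eq_zero_or_pos k with h | h
      · subst h; intro h; apply hq; push_cast at h; linarith
      · have : (1 : ℝ) ≤ k := by exact_mod_cast h
        have : 0 < (m : ℝ) + 1 + (α + β) + k := by linarith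
        exact this.ne'
    exact rstep a b α β s m k (by intro h; linarith) h2 (by intro h; linarith)
      (by intro h; linarith) (by intro h; linarith) (by intro h; linarith)
      (by intro h; linarith) (by intro h; linarith) (by intro h; linarith)
  have part : ∀ K : ℕ, K ≤ m + 1 →
      theta0 α β (m + 2) * ∑ k ∈ Finset.range (K + 1), rcoef a b α β (m + 2) k * rphi a s k -
      theta11 a b α β (m + 2) s *
        ∑ k ∈ Finset.range (K + 1), rcoef a b α β (m + 1) k * rphi a s k -
      theta21 a b α β (m + 2) * ∑ k ∈ Finset.range (K + 1), rcoef a b α β m k * rphi a s k =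
      rcoef a b α β (m + 1) K * rphi a s (K + 1) := by
    intro K
    induction K with
    | zero =>
      intro h
      have := step 0 h
      rw [rphi_succ]
      simp only [zero_add, Finset.sum_range_one]
      simp only [Nat.cast_zero, zero_mul, zero_div] at this ⊢
      linear_combination rphi a s 0 * this
    | succ K ih =>
      intro h
      have := step (K + 1) h
      have ih := ih (by omega)
      have hK : (K : ℝ) ≤ m := by exact_mod_cast (by omega : K ≤ m)
      have hK0 : (0 : ℝ) ≤ K := Nat.cast_nonneg K
      have ck := rcoef_k a b α β (m + 1) K (by intro h; linarith) (by intro h; linarith)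
        (by intro h; linarith)
      rw [rphi_succ a s (K + 1)]
      simp only [Finset.sum_range_succ _ (K + 1)]
      push_cast at this ck ⊢
      have hd : ((m : ℝ) + 2 - (K + 1)) * (m + 1 + (α + β) + (K + 1)) ≠ 0 := by
        apply mul_ne_zero <;> intro h <;> linarith
      have e : rcoef a b α β (m + 1) (K + 1) * (((K : ℝ) + 1) * (β + (K + 1)) *
         (a + b + α + (K + 1)) * (a - b + (K + 1)) /
          (((m : ℝ) + 2 - (K + 1)) * (m + 1 + (α + β) + (K + 1)))) =
          - rcoef a b α β (m + 1) K := by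
        rw [← mul_div_assoc, div_eq_iff hd]
        linear_combination ck
      linear_combination rphi a s (K + 1) * this + ih + rphi a s (K + 1) * e
  have P := part (m + 1) le_rfl
  rw [racahR_eq, racahR_eq, racahR_eq, Finset.sum_range_succ _ (m + 2)]
  have z : rcoef a b α β m (m + 1) = 0 := by
    unfold rcoef; rw [pochR_succ]; simp
  rw [Finset.sum_range_succ (fun k => rcoef a b α β m k * rphi a s k) (m + 1), z] at P
  have c1 := rcoef_k a b α β (m + 2) (m + 1) (by push_cast; intro h; linarith)
    (by push_cast; intro h; linarith) (by push_cast; intro h; linarith)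
  have c2 := rcoef_n a b α β (m + 1) (m + 1)
  push_cast at c1 c2
  have top : theta0 α β (m + 2) * rcoef a b α β (m + 2) (m + 2) =
      - rcoef a b α β (m + 1) (m + 1) := by
    unfold theta0
    push_cast
    have X : (β + 1 + ((m : ℝ) + 1)) * (a + b + α + 1 + (m + 1)) * (a - b + 1 + (m + 1)) *
      (m + 1 + (α + β) + 1) ≠ 0 := by
      refine mul_ne_zero (mul_ne_zero (mul_ne_zero ?_ ?_) ?_) ?_ <;> intro h <;> linarith
    have Z : (α + β + 2 * ((m : ℝ) + 2) - 1) * (α + β + 2 * ((m : ℝ) + 2)) ≠ 0 := by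
      refine mul_ne_zero ?_ ?_ <;> intro h <;> linarith
    rw [div_mul_eq_mul_div, div_eq_iff Z]
    apply mul_left_cancel₀ X
    linear_combination ((m : ℝ) + 2 + (α + β)) * (m + 1 + (α + β) + 1) * c1 -
      ((m : ℝ) + 2 + (α + β)) * (m + 2 + (α + β) + 1 + (m + 1)) * c2
  linear_combination P + rphi a s (m + 2) * top

lemma rD2 (N : ℕ) (a α β b : ℝ) (ha : -(1/2) < a) (hα : -1 < α)
    (hβ1 : -1 < β) (hβ2 : β < 2 * a + 1) (hb : b = a + N) (j : ℕ) (hj : j + 2 ≤ N)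
    (hq : α + β + 2 * j + 1 ≠ 0) (hq2 : α + β + j + 1 ≠ 0) :
    racahD2 a b α β j = theta12 a b α β (j + 1) * racahD2 a b α β (j + 1) ∧
      0 ≤ theta12 a b α β (j + 1) := by
  have hN : (j : ℝ) + 2 ≤ N := by exact_mod_cast hj
  have hj0 : (0 : ℝ) ≤ j := Nat.cast_nonneg j
  have p1 : 0 < α + j + 1 := by linarith
  have p2 : 0 < β + j + 1 := by linarith
  have p3 : 0 < a + b + α + j + 1 := by linarith
  have p4 : 0 < b - a + α + β + j + 1 := by linarith
  have p5 : 0 < b - a - (j + 1) := by linarith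
  have p6 : 0 < a + b - (j + 1) - β := by linarith
  have p7 : 0 < α + β + 2 * j + 3 := by linarith
  have p8 : 0 < (j : ℝ) + 1 := by linarith
  have th : theta12 a b α β (j + 1) = ((j : ℝ) + 1) * (α + β + j + 1) * (α + β + 2 * j + 3) /
    ((α + j + 1) * (β + j + 1) * (α + β + 2 * j + 1) * (b - a + α + β + j + 1) *
      (b - a - (j + 1)) * (a + b + α + j + 1) * (a + b - (j + 1) - β)) := by
    unfold theta12
    push_cast
    congr 1 <;> ring
  constructor
  · rw [th]
    unfold racahD2
    have g1 := Real.Gamma_add_one p1.ne'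
    have g2 := Real.Gamma_add_one p2.ne'
    have g3 := Real.Gamma_add_one p3.ne'
    have g4 := Real.Gamma_add_one p4.ne'
    have g5 := Real.Gamma_add_one p5.ne'
    have g6 := Real.Gamma_add_one p6.ne'
    have g7 := Real.Gamma_add_one hq2
    have g8 := Real.Gamma_add_one p8.ne'
    push_cast
    rw [show α + ((j : ℝ) + 1) + 1 = α + j + 1 + 1 by ring, g1,
      show β + ((j : ℝ) + 1) + 1 = β + j + 1 + 1 by ring, g2,
      show a + b + α + ((j : ℝ) + 1) + 1 = a + b + α + j + 1 + 1 by ring, g3,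
      show b - a + α + β + ((j : ℝ) + 1) + 1 = b - a + α + β + j + 1 + 1 by ring, g4,
      show b - a - (j : ℝ) = b - a - (j + 1) + 1 by ring, g5,
      show a + b - (j : ℝ) - β = a + b - (j + 1) - β + 1 by ring, g6,
      show α + β + ((j : ℝ) + 1) + 1 = α + β + j + 1 + 1 by ring, g7, g8,
      show α + β + 2 * ((j : ℝ) + 1) + 1 = α + β + 2 * j + 3 by ring]
    have G8 := (Real.Gamma_pos_of_pos p8).ne'
    have G5 := (Real.Gamma_pos_of_pos p5).ne'
    have G6 := (Real.Gamma_pos_of_pos p6).ne'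
    have G7 : Real.Gamma (α + β + j + 1) ≠ 0 := by
      rcases Nat.eq_zero_or_pos j with h | h
      · subst h
        push_cast at hq2 ⊢
        have : Real.Gamma (α + β + 0 + 1 + 1) ≠ 0 :=
          (Real.Gamma_pos_of_pos (by linarith)).ne'
        rw [Real.Gamma_add_one hq2] at this
        exact right_ne_zero_of_mul this
      · have : (1 : ℝ) ≤ j := by exact_mod_cast h
        exact (Real.Gamma_pos_of_pos (by linarith)).ne'
    have q1 := p1.ne'
    have q2 := p2.ne'
    have q3 := p3.ne'
    have q4 := p4.ne'
    have q5 := p5.ne'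
    have q6 := p6.ne'
    have q7 := p7.ne'
    have q8 := p8.ne'
    generalize Real.Gamma (α + j + 1) = x1 at *
    generalize Real.Gamma (β + j + 1) = x2 at *
    generalize Real.Gamma (a + b + α + j + 1) = x3 at *
    generalize Real.Gamma (b - a + α + β + j + 1) = x4 at *
    generalize Real.Gamma (b - a - (j + 1)) = x5 at *
    generalize Real.Gamma (a + b - (j + 1) - β) = x6 at *
    generalize Real.Gamma (α + β + j + 1) = x7 at *
    generalize Real.Gamma ((j : ℝ) + 1) = x8 at *
    clear g1 g2 g3 g4 g5 g6 g7 g8 p1 p2 p3 p4 p5 p6 p7 p8 th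
    generalize α + (j : ℝ) + 1 = y1 at *
    generalize β + (j : ℝ) + 1 = y2 at *
    generalize a + b + α + (j : ℝ) + 1 = y3 at *
    generalize b - a + α + β + (j : ℝ) + 1 = y4 at *
    generalize b - a - ((j : ℝ) + 1) = y5 at *
    generalize a + b - ((j : ℝ) + 1) - β = y6 at *
    generalize α + β + (j : ℝ) + 1 = y7 at *
    generalize α + β + 2 * (j : ℝ) + 3 = y9 at *
    generalize α + β + 2 * (j : ℝ) + 1 = y10 at *
    generalize (j : ℝ) + 1 = y8 at *
    field_simp
  · have hr : 0 ≤ (α + β + j + 1) / (α + β + 2 * j + 1) := by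
      rcases Nat.eq_zero_or_pos j with h | h
      · subst h
        simp only [Nat.cast_zero, mul_zero] at hq ⊢
        rw [div_self hq]; norm_num
      · have : (1 : ℝ) ≤ j := by exact_mod_cast h
        exact div_nonneg (by linarith) (by linarith)
    rw [th, show ∀ A u B x y v z w p r : ℝ, A * u * B / (x * y * v * z * w * p * r) =
      (u / v) * (A * B / (x * y * z * w * p * r)) from by
        intros; simp only [div_eq_mul_inv, mul_inv]; ring]
    positivity

theorem racah_three_term_recurrence_degree
    (N : ℕ) (hN : 2 ≤ N) (a α β b : ℝ) (ha : -(1/2) < a) (hα : -1 < α)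
    (hβ1 : -1 < β) (hβ2 : β < 2 * a + 1) (hb : b = a + N)
    (n : ℕ) (hn2 : 2 ≤ n) (hn : n ≤ N - 1) (x : ℕ) (hx : x ≤ N - 1)
    (hden0 : (α + β + 2 * n - 1) * (α + β + 2 * n) ≠ 0)
    (hden11 : (α + β + 2 * n - 2) * (α + β + 2 * n) ≠ 0)
    (hden21 : (α + β + 2 * n - 2) * (α + β + 2 * n - 1) ≠ 0)
    (hden12 : (α + n) * (β + n) * (α + β + 2 * n - 1) * (a - b - α - β - n) *
        (a - b + n) * (a + b + α + n) * (a + b - β - n) ≠ 0)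
    (hden22 : (α + n - 1) * (β + n - 1) * (α + β + 2 * n - 3) *
        (a - b - α - β - n + 1) * (a - b + n - 1) * (a + b + α + n - 1) *
        (a + b - β - n + 1) ≠ 0)
    (hth0 : theta0 α β n ≠ 0) :
    racahHat a b α β n (a + x) =
      (theta11 a b α β n (a + x) / theta0 α β n) * Real.sqrt (theta12 a b α β n) *
          racahHat a b α β (n - 1) (a + x) +
        (theta21 a b α β n / theta0 α β n) *
          Real.sqrt (theta12 a b α β n * theta22 a b α β n) *
          racahHat a b α β (n - 2) (a + x) := by
  obtain ⟨m, rfl⟩ : ∃ m, n = m + 2 := ⟨n - 2, by omega⟩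
  have hm0 : (0 : ℝ) ≤ m := Nat.cast_nonneg m
  have hq3 : α + β + 2 * m + 1 ≠ 0 := by
    have := right_ne_zero_of_mul (left_ne_zero_of_mul (left_ne_zero_of_mul
      (left_ne_zero_of_mul (left_ne_zero_of_mul hden22))))
    push_cast at this
    intro h; apply this; linarith
  have hq1 : α + β + m + 1 ≠ 0 := by
    rcases Nat.eq_zero_or_pos m with h | h
    · subst h; simpa using hq3
    · have : (1 : ℝ) ≤ m := by exact_mod_cast h
      intro h; linarith
  have R := rrec N a α β b (a + x) ha hα hβ1 hb m (by omega)
    (by intro h; apply hq1; linarith)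
  obtain ⟨A1, A2⟩ := rD2 N a α β b ha hα hβ1 hβ2 hb m (by omega) hq3 hq1
  obtain ⟨B1, B2⟩ := rD2 N a α β b ha hα hβ1 hβ2 hb (m + 1) (by omega)
    (by push_cast; intro h; linarith) (by push_cast; intro h; linarith)
  have e22 : theta22 a b α β (m + 2) = theta12 a b α β (m + 1) := by
    unfold theta22 theta12
    push_cast
    congr 1 <;> ring
  have n12 : theta12 a b α β (m + 2) ≠ 0 := by
    unfold theta12
    apply div_ne_zero _ hden12
    push_cast
    refine mul_ne_zero (mul_ne_zero ?_ ?_) ?_ <;> intro h <;> linarith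
  have n22 : theta12 a b α β (m + 1) ≠ 0 := by
    rw [← e22]
    unfold theta22
    apply div_ne_zero _ hden22
    push_cast
    refine mul_ne_zero (mul_ne_zero ?_ ?_) ?_ <;> intro h
    · linarith
    · apply hq1; linarith
    · linarith
  have m1 : m + 2 - 1 = m + 1 := rfl
  have m2 : m + 2 - 2 = m := rfl
  rw [m1, m2, e22]
  unfold racahHat
  generalize racahW a b α β (a + x) * (2 * (a + x) + 1) = W
  have s1 : Real.sqrt (W / racahD2 a b α β (m + 2)) =
      Real.sqrt (theta12 a b α β (m + 2)) * Real.sqrt (W / racahD2 a b α β (m + 1)) := by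
    rw [← Real.sqrt_mul B2, B1]
    congr 1
    rw [← mul_div_assoc, mul_div_mul_left _ _ n12]
  have s2 : Real.sqrt (W / racahD2 a b α β (m + 2)) =
      Real.sqrt (theta12 a b α β (m + 2) * theta12 a b α β (m + 1)) *
        Real.sqrt (W / racahD2 a b α β m) := by
    rw [← Real.sqrt_mul (mul_nonneg B2 A2), A1, B1]
    congr 1
    rw [← mul_div_assoc, mul_comm (theta12 a b α β (m + 2)), mul_assoc,
      mul_div_mul_left _ _ n22, mul_div_mul_left _ _ n12]
  have R' : racahR a b α β (m + 2) (a + x) =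
      theta11 a b α β (m + 2) (a + x) / theta0 α β (m + 2) * racahR a b α β (m + 1) (a + x) +
      theta21 a b α β (m + 2) / theta0 α β (m + 2) * racahR a b α β m (a + x) := by
    apply mul_left_cancel₀ hth0
    rw [R]
    field_simp
  rw [R', add_mul]
  nth_rewrite 2 [s2]
  rw [s1]
  ring
end

section
/- For every integer n with 0 ≤ n ≤ N−1, provided τ(a) ≠ 0, the weighted Racah polynomials satisfy R̂_n(a+1) = E·√[(ρ(a+1)/ρ(a))·((2a+3)/(2a+1))]·R̂_n(a), where E = 1 − 2·λ_n·(a+1)/τ(a) = 1 + 2n(α+β+n+1)(a+1) / [(α+1)(β+1) + a(a+1)(α+β+2) − a(α+1)(a−β) − b(β+1)(b+α)]. -/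
open Finset

lemma pochR_zero_of (x : ℝ) (i k : ℕ) (hx : x + i = 0) (h : i < k) : pochR x k = 0 := by
  unfold pochR
  exact Finset.prod_eq_zero (Finset.mem_range.2 h) hx

lemma pochR_at_zero (x : ℝ) : pochR x 0 = 1 := by simp [pochR]

lemma pochR_at_one (x : ℝ) : pochR x 1 = x := by simp [pochR]

lemma racahR_at_a (a b α β : ℝ) (n : ℕ) :
    racahR a b α β n a = (1 / (Nat.factorial n : ℝ)) * pochR (a + b + α + 1) n *
      pochR (β + 1) n * pochR (a - b + 1) n := by
  unfold racahR
  rw [Finset.sum_range_succ', Finset.sum_eq_zero]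
  · simp [pochR_at_zero]
  · intro k _
    rw [pochR_zero_of (a - a) 0 (k + 1) (by simp) (by omega)]
    simp

lemma racahR_at_a_succ (a b α β : ℝ) (n : ℕ) :
    racahR a b α β n (a + 1) = racahR a b α β n a *
      (1 + 2 * n * (α + β + n + 1) * (a + 1) /
        ((β + 1) * (a + b + α + 1) * (a - b + 1))) := by
  rw [racahR_at_a]
  unfold racahR
  congr 1
  rcases n with _ | n
  · simp [pochR_at_zero]
  · rw [Finset.sum_range_succ', Finset.sum_range_succ', Finset.sum_eq_zero]
    · simp only [pochR_at_zero, zero_add, pochR_at_one]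
      simp
      ring
    · intro k _
      rw [pochR_zero_of (a - (a + 1)) 1 (k + 1 + 1) (by simp) (by omega)]
      simp

lemma racahW_a_pos (N : ℕ) (hN : 2 ≤ N) (a α β : ℝ) (ha : -(1/2) < a) (hα : -1 < α)
    (hβ1 : -1 < β) (hβ2 : β < 2 * a + 1) (t : ℝ) (ht0 : 0 ≤ t) (ht1 : t ≤ 1) :
    0 < racahW a (a + N) α β (a + t) := by
  have h2 : (2 : ℝ) ≤ N := by exact_mod_cast hN
  unfold racahW
  have h (x : ℝ) (hx : 0 < x) := Real.Gamma_pos_of_pos hx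
  refine div_pos (mul_pos (mul_pos (mul_pos (h _ ?_) (h _ ?_)) (h _ ?_)) (h _ ?_))
    (mul_pos (mul_pos (mul_pos (h _ ?_) (h _ ?_)) (h _ ?_)) (h _ ?_)) <;> linarith

theorem racah_second_column_recurrence
    (N : ℕ) (hN : 2 ≤ N) (a α β b : ℝ) (ha : -(1/2) < a) (hα : -1 < α)
    (hβ1 : -1 < β) (hβ2 : β < 2 * a + 1) (hb : b = a + N)
    (n : ℕ) (hn : n ≤ N - 1) (hτ : racahTau a b α β a ≠ 0) :
    racahHat a b α β n (a + 1) =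
        (1 - 2 * racahLam α β n * (a + 1) / racahTau a b α β a) *
          Real.sqrt ((racahW a b α β (a + 1) / racahW a b α β a) *
            ((2 * a + 3) / (2 * a + 1))) *
          racahHat a b α β n a ∧
      1 - 2 * racahLam α β n * (a + 1) / racahTau a b α β a =
        1 + 2 * n * (α + β + n + 1) * (a + 1) /
          ((α + 1) * (β + 1) + a * (a + 1) * (α + β + 2) -
            a * (α + 1) * (a - β) - b * (β + 1) * (b + α)) := by
  have hT : racahTau a b α β a = -((β + 1) * (a + b + α + 1) * (a - b + 1)) := by
    unfold racahTau; ring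
  have hD : (α + 1) * (β + 1) + a * (a + 1) * (α + β + 2) -
      a * (α + 1) * (a - β) - b * (β + 1) * (b + α)
      = (β + 1) * (a + b + α + 1) * (a - b + 1) := by ring
  have hE : 1 - 2 * racahLam α β n * (a + 1) / racahTau a b α β a =
      1 + 2 * n * (α + β + n + 1) * (a + 1) /
        ((β + 1) * (a + b + α + 1) * (a - b + 1)) := by
    rw [hT, div_neg, sub_neg_eq_add]
    unfold racahLam
    congr 2
    ring
  refine ⟨?_, by rw [hD, hE]⟩
  have w0 : 0 < racahW a b α β a := by
    have := racahW_a_pos N hN a α β ha hα hβ1 hβ2 0 le_rfl zero_le_one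
    rwa [add_zero, ← hb] at this
  have w1 : 0 < racahW a b α β (a + 1) := by
    have := racahW_a_pos N hN a α β ha hα hβ1 hβ2 1 zero_le_one le_rfl
    rwa [← hb] at this
  have p1 : 0 < 2 * a + 1 := by linarith
  have p3 : 0 < 2 * a + 3 := by linarith
  rw [hE]
  unfold racahHat
  rw [racahR_at_a_succ]
  have hS : racahW a b α β (a + 1) * (2 * (a + 1) + 1) / racahD2 a b α β n =
      (racahW a b α β (a + 1) / racahW a b α β a * ((2 * a + 3) / (2 * a + 1))) *
        (racahW a b α β a * (2 * a + 1) / racahD2 a b α β n) := by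
    have q0 := w0.ne'
    have q1 := p1.ne'
    rw [← mul_div_assoc]
    congr 1
    rw [div_mul_div_comm, div_mul_cancel₀ _ (mul_ne_zero q0 q1)]
    ring
  rw [hS, Real.sqrt_mul (by positivity)]
  ring
end

section
/- In the special case a = α = β = 0 (so b = N), for all integers n, s with 0 ≤ n ≤ N−1 and 0 ≤ s ≤ N−1, the weighted Racah polynomial has the closed form R̂_n(s) = ((−1)^n / N)·√((2n+1)(2s+1))·Σ_{k=0}^{n} [(−n)_k·(−s)_k·(s+1)_k·(n+1)_k] / [(1)_k·(N+1)_k·(1−N)_k·k!]. -/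
open Finset

theorem pochR_one_eq (n : ℕ) : pochR 1 n = (Nat.factorial n : ℝ) := by
  induction n with
  | zero => simp [pochR]
  | succ k ih =>
    have h : pochR 1 (k + 1) = pochR 1 k * (1 + k) := by simp [pochR, Finset.prod_range_succ]
    rw [h, ih, Nat.factorial_succ]; push_cast; ring

theorem gamma_up (x : ℝ) (hx : 0 < x) (n : ℕ) :
    Real.Gamma (x + n) = pochR x n * Real.Gamma x := by
  induction n with
  | zero => simp [pochR]
  | succ k ih =>
    have h : pochR x (k + 1) = pochR x k * (x + k) := by simp [pochR, Finset.prod_range_succ]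
    have h2 : x + ((k + 1 : ℕ) : ℝ) = (x + k) + 1 := by push_cast; ring
    rw [h, h2, Real.Gamma_add_one (by positivity), ih]; ring

theorem gamma_down (x : ℝ) (n : ℕ) (hx : (n : ℝ) < x) :
    Real.Gamma x = (-1) ^ n * pochR (1 - x) n * Real.Gamma (x - n) := by
  induction n with
  | zero => simp [pochR]
  | succ k ih =>
    push_cast at hx
    have h : pochR (1 - x) (k + 1) = pochR (1 - x) k * (1 - x + k) := by
      simp [pochR, Finset.prod_range_succ]
    have h2 : x - (k : ℝ) = (x - ((k + 1 : ℕ) : ℝ)) + 1 := by push_cast; ring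
    have h3 : x - ((k + 1 : ℕ) : ℝ) ≠ 0 := by push_cast; linarith
    rw [ih (by linarith), h, h2, Real.Gamma_add_one h3]; push_cast; ring

theorem racah_special_case_closed_form
    (N : ℕ) (hN : 2 ≤ N) (n s : ℕ) (hn : n ≤ N - 1) (hs : s ≤ N - 1) :
    racahHat 0 (N : ℝ) 0 0 n (s : ℝ) =
      ((-1 : ℝ) ^ n / (N : ℝ)) * Real.sqrt ((2 * (n : ℝ) + 1) * (2 * (s : ℝ) + 1)) *
        ∑ k ∈ Finset.range (n + 1),
          pochR (-(n : ℝ)) k * pochR (-(s : ℝ)) k * pochR ((s : ℝ) + 1) k *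
              pochR ((n : ℝ) + 1) k /
            (pochR 1 k * pochR ((N : ℝ) + 1) k * pochR (1 - (N : ℝ)) k *
              (Nat.factorial k : ℝ)) := by
  have hnN : (n : ℝ) < N := by exact_mod_cast (by omega : n < N)
  have hsN : (s : ℝ) < N := by exact_mod_cast (by omega : s < N)
  have hN0 : (0 : ℝ) < N := by exact_mod_cast (by omega : 0 < N)
  have hn0 : (0 : ℝ) ≤ n := Nat.cast_nonneg n
  have hs0 : (0 : ℝ) ≤ s := Nat.cast_nonneg s
  have g1 : Real.Gamma ((s : ℝ) + 1) ≠ 0 := (Real.Gamma_pos_of_pos (by linarith)).ne'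
  have g2 : Real.Gamma ((N : ℝ) + s + 1) ≠ 0 := (Real.Gamma_pos_of_pos (by linarith)).ne'
  have g3 : Real.Gamma ((N : ℝ) - s) ≠ 0 := (Real.Gamma_pos_of_pos (by linarith)).ne'
  have g4 : Real.Gamma ((n : ℝ) + 1) ≠ 0 := (Real.Gamma_pos_of_pos (by linarith)).ne'
  have g5 : 0 < Real.Gamma ((N : ℝ) + n + 1) := Real.Gamma_pos_of_pos (by linarith)
  have g6 : 0 < Real.Gamma ((N : ℝ) - n) := Real.Gamma_pos_of_pos (by linarith)
  have g7 : 0 < Real.Gamma (N : ℝ) := Real.Gamma_pos_of_pos hN0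
  have hW : racahW 0 (N : ℝ) 0 0 s = 1 := by
    simp only [racahW, zero_add, add_zero, sub_zero]
    field_simp
  have hD : racahD2 0 (N : ℝ) 0 0 n =
      (Real.Gamma ((N : ℝ) + n + 1) / Real.Gamma ((N : ℝ) - n)) ^ 2 / (2 * n + 1) := by
    simp only [racahD2, zero_add, add_zero, sub_zero]
    field_simp
  have hup : Real.Gamma ((N : ℝ) + n + 1) = pochR (N + 1) n * (N * Real.Gamma N) := by
    have := gamma_up ((N : ℝ) + 1) (by linarith) n
    rw [Real.Gamma_add_one hN0.ne'] at this
    rw [← this]; congr 1; ring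
  have hdn := gamma_down (N : ℝ) n hnN
  have hm : ((-1 : ℝ) ^ n) * (-1) ^ n = 1 := by rw [← mul_pow]; simp
  have hprod : pochR ((N : ℝ) + 1) n * pochR (1 - (N : ℝ)) n =
      (-1) ^ n / N * (Real.Gamma ((N : ℝ) + n + 1) / Real.Gamma ((N : ℝ) - n)) := by
    have e : pochR (1 - (N : ℝ)) n = (-1) ^ n * (Real.Gamma N / Real.Gamma ((N : ℝ) - n)) := by
      rw [← mul_right_inj' g6.ne']
      field_simp
      rw [hdn]
      linear_combination (-(Real.Gamma ((N : ℝ) - n) * pochR (1 - (N : ℝ)) n)) * hm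
    rw [hup, e]
    field_simp
  have hsq : Real.sqrt (racahW 0 (N : ℝ) 0 0 s * (2 * s + 1) / racahD2 0 (N : ℝ) 0 0 n) =
      Real.sqrt ((2 * (n : ℝ) + 1) * (2 * (s : ℝ) + 1)) /
        (Real.Gamma ((N : ℝ) + n + 1) / Real.Gamma ((N : ℝ) - n)) := by
    have hG : 0 < Real.Gamma ((N : ℝ) + n + 1) / Real.Gamma ((N : ℝ) - n) := div_pos g5 g6
    rw [hW, hD]
    generalize Real.Gamma ((N : ℝ) + n + 1) / Real.Gamma ((N : ℝ) - n) = G at hG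
    have e : 1 * (2 * (s : ℝ) + 1) / (G ^ 2 / (2 * n + 1)) =
        (2 * (n : ℝ) + 1) * (2 * (s : ℝ) + 1) / G ^ 2 := by field_simp
    rw [e, Real.sqrt_div (by positivity), Real.sqrt_sq hG.le]
  have hG : 0 < Real.Gamma ((N : ℝ) + n + 1) / Real.Gamma ((N : ℝ) - n) := div_pos g5 g6
  have hf : (Nat.factorial n : ℝ) ≠ 0 := by exact_mod_cast Nat.factorial_ne_zero n
  rw [racahHat, hsq, racahR]
  have e1 : -(N : ℝ) + 1 = 1 - N := by ring
  simp only [zero_add, add_zero, zero_sub, e1]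
  generalize (∑ k ∈ Finset.range (n + 1), _ : ℝ) = S
  generalize Real.Gamma ((N : ℝ) + n + 1) / Real.Gamma ((N : ℝ) - n) = G at hG hprod
  rw [pochR_one_eq]
  calc _ = (pochR ((N : ℝ) + 1) n * pochR (1 - (N : ℝ)) n) * S *
        (Real.sqrt ((2 * (n : ℝ) + 1) * (2 * (s : ℝ) + 1)) / G) := by field_simp
    _ = _ := by rw [hprod]; field_simp
end
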